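/- Let α = (X_g, α_g)_{g∈G} be a partial action of a groupoid G on a set X, and suppose the global action β = (Y_g, β_g)_{g∈G} of G on Y is a globalization of α (with X ⊆ Y and i the inclusion). Then α is transitive if and only if β is transitive. -/

import Mathlib

universe u v w

/-- A groupoid as an algebraic structure: a set `G` with a (totalized) partially
defined multiplication, inversion, source `d` and range `r`.  The product `mul g h`
is only meaningful when `d g = r h`. -/
structure SetGroupoid (G : Type u) where
  mul : G → G → G
  inv : G → G
  d : G → G
  r : G → G
  inv_inv : ∀ g, inv (inv g) = g
  d_inv : ∀ g, d (inv g) = r g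
  r_inv : ∀ g, r (inv g) = d g
  mul_d_self : ∀ g, mul g (d g) = g
  r_mul_self : ∀ g, mul (r g) g = g
  inv_mul : ∀ g, mul (inv g) g = d g
  mul_inv : ∀ g, mul g (inv g) = r g
  d_mul : ∀ g h, d g = r h → d (mul g h) = d h
  r_mul : ∀ g h, d g = r h → r (mul g h) = r g
  mul_assoc : ∀ g h k, d g = r h → d h = r k → mul (mul g h) k = mul g (mul h k)
  d_idem : ∀ g, d (d g) = d g
  r_d : ∀ g, r (d g) = d g

/-- A (set theoretical) partial action of a groupoid `G` on a set `X`: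
subsets `D g = X_g` and (totalized) bijections `act g : X_{g⁻¹} → X_g`, together with
the anchor map sending `x` to the unique identity `e` with `x ∈ X_e`. -/
structure PartialAction {G : Type u} (𝒢 : SetGroupoid G) (X : Type v) where
  D : G → Set X
  act : G → X → X
  anchor : X → G
  anchor_isUnit : ∀ x, 𝒢.d (anchor x) = anchor x
  mem_anchor : ∀ x, x ∈ D (anchor x)
  anchor_unique : ∀ x e, 𝒢.d e = e → x ∈ D e → e = anchor x
  D_subset : ∀ g, D g ⊆ D (𝒢.r g)
  act_unit : ∀ e, 𝒢.d e = e → ∀ x ∈ D e, act e x = x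
  act_mem : ∀ g, ∀ x ∈ D (𝒢.inv g), act g x ∈ D g
  act_act : ∀ g, ∀ x ∈ D (𝒢.inv g), act (𝒢.inv g) (act g x) = x
  act_comp_mem : ∀ g h, 𝒢.d g = 𝒢.r h → ∀ x, x ∈ D (𝒢.inv g) → x ∈ D h →
      act g x ∈ D (𝒢.mul g h)
  act_comp : ∀ g h, 𝒢.d g = 𝒢.r h → ∀ x, x ∈ D (𝒢.inv h) → act h x ∈ D (𝒢.inv g) →
      act g (act h x) = act (𝒢.mul g h) x

namespace PartialAction

variable {G : Type u} {X : Type v} {𝒢 : SetGroupoid G}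

/-- A partial action is global if `α_{gh} = α_g ∘ α_h` (as partial maps, including
equality of domains) for every composable pair `(g,h) ∈ G²`. -/
def IsGlobal (α : PartialAction 𝒢 X) : Prop :=
  ∀ g h, 𝒢.d g = 𝒢.r h →
    ((∀ x, x ∈ α.D (𝒢.inv (𝒢.mul g h)) ↔ x ∈ α.D (𝒢.inv h) ∧ α.act h x ∈ α.D (𝒢.inv g)) ∧
      ∀ x ∈ α.D (𝒢.inv (𝒢.mul g h)), α.act (𝒢.mul g h) x = α.act g (α.act h x))

/-- Transitivity: some point has orbit equal to all of `X`. -/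
def Transitive (α : PartialAction 𝒢 X) : Prop :=
  ∃ x : X, ∀ y : X, ∃ g, x ∈ α.D (𝒢.inv g) ∧ y = α.act g x

/-- Freeness: every stabilizer reduces to the anchor identity. -/
def Free (α : PartialAction 𝒢 X) : Prop :=
  ∀ (x : X) (g : G), x ∈ α.D (𝒢.inv g) → α.act g x = x → g = α.anchor x

end PartialAction

/-- `β` (a global action of `G` on `Y`) is a globalization of the partial action `α`
of `G` on `X`, via the injection `i : X → Y`. -/
structure IsGlobalization {G : Type u} {X : Type v} {Y : Type w} {𝒢 : SetGroupoid G}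
    (α : PartialAction 𝒢 X) (β : PartialAction 𝒢 Y) (i : X → Y) : Prop where
  global : β.IsGlobal
  inj : Function.Injective i
  cond_i : ∀ g, i '' α.D g = Set.range i ∩ β.act g '' (Set.range i ∩ β.D (𝒢.inv g))
  cond_ii : ∀ g, ∀ x ∈ α.D (𝒢.inv g), β.act g (i x) = i (α.act g x)
  cond_iii : ∀ g, β.D g = ⋃ h ∈ {h : G | 𝒢.r h = 𝒢.r g}, β.act h '' (i '' α.D (𝒢.d h))

/-!
The orbit relation of `α` is the restriction along `i` of the orbit relation of `β`, and every
`β`-orbit meets the image of `i`. Hence `i` induces a bijection between the orbits of `α` and those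
of `β`, and transitivity says that there is exactly one orbit.
-/

namespace SetGroupoid

variable {G : Type u} (𝒢 : SetGroupoid G)

theorem d_r (g : G) : 𝒢.d (𝒢.r g) = 𝒢.r g := by
  rw [← 𝒢.d_inv, 𝒢.d_idem]

theorem eq_inv_of_mul_eq_d {g h : G} (hgh : 𝒢.d g = 𝒢.r h) (hmul : 𝒢.mul g h = 𝒢.d h) :
    g = 𝒢.inv h :=
  calc
    g = 𝒢.mul g (𝒢.mul h (𝒢.inv h)) := by rw [𝒢.mul_inv, ← hgh, 𝒢.mul_d_self]
    _ = 𝒢.mul (𝒢.mul g h) (𝒢.inv h) := (𝒢.mul_assoc _ _ _ hgh (𝒢.r_inv h).symm).symm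
    _ = 𝒢.inv h := by rw [hmul, ← 𝒢.r_inv, 𝒢.r_mul_self]

theorem inv_eq_self_of_d_eq_self {e : G} (he : 𝒢.d e = e) : 𝒢.inv e = e := by
  have hr : 𝒢.r e = e := by simpa only [he] using 𝒢.r_d e
  have hmul : 𝒢.mul e e = e := by simpa only [he] using 𝒢.mul_d_self e
  exact (𝒢.eq_inv_of_mul_eq_d (he.trans hr.symm) (hmul.trans he.symm)).symm

theorem mul_inv_rev {g h : G} (hgh : 𝒢.d g = 𝒢.r h) :
    𝒢.inv (𝒢.mul g h) = 𝒢.mul (𝒢.inv h) (𝒢.inv g) := by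
  have hinv : 𝒢.d (𝒢.inv h) = 𝒢.r (𝒢.inv g) := by rw [𝒢.d_inv, 𝒢.r_inv, hgh]
  have hr : 𝒢.d (𝒢.inv g) = 𝒢.r (𝒢.mul g h) := by rw [𝒢.d_inv, 𝒢.r_mul g h hgh]
  symm
  apply 𝒢.eq_inv_of_mul_eq_d
  · rw [𝒢.d_mul _ _ hinv, hr]
  · calc
      𝒢.mul (𝒢.mul (𝒢.inv h) (𝒢.inv g)) (𝒢.mul g h)
          = 𝒢.mul (𝒢.inv h) (𝒢.mul (𝒢.inv g) (𝒢.mul g h)) := 𝒢.mul_assoc _ _ _ hinv hr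
      _ = 𝒢.mul (𝒢.inv h) (𝒢.mul (𝒢.mul (𝒢.inv g) g) h) := by
        rw [𝒢.mul_assoc _ _ _ (𝒢.d_inv g) hgh]
      _ = 𝒢.mul (𝒢.inv h) h := by rw [𝒢.inv_mul, hgh, 𝒢.r_mul_self]
      _ = 𝒢.d (𝒢.mul g h) := by rw [𝒢.inv_mul, 𝒢.d_mul g h hgh]

end SetGroupoid

namespace PartialAction

variable {G : Type u} {X : Type v} {𝒢 : SetGroupoid G} (α : PartialAction 𝒢 X)

theorem D_inv_subset_D_d (g : G) : α.D (𝒢.inv g) ⊆ α.D (𝒢.d g) := by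
  simpa only [𝒢.r_inv] using α.D_subset (𝒢.inv g)

theorem d_eq_r_of_mem {g h : G} {x : X} (hg : x ∈ α.D (𝒢.inv g)) (hh : x ∈ α.D h) :
    𝒢.d g = 𝒢.r h :=
  (α.anchor_unique x _ (𝒢.d_idem g) (α.D_inv_subset_D_d g hg)).trans
    (α.anchor_unique x _ (𝒢.d_r h) (α.D_subset h hh)).symm

theorem mem_D_inv_mul {g h : G} {x : X} (hx : x ∈ α.D (𝒢.inv h))
    (hhx : α.act h x ∈ α.D (𝒢.inv g)) : x ∈ α.D (𝒢.inv (𝒢.mul g h)) := by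
  have hgh : 𝒢.d g = 𝒢.r h := α.d_eq_r_of_mem hhx (α.act_mem h x hx)
  have hinv : 𝒢.d (𝒢.inv h) = 𝒢.r (𝒢.inv g) := by rw [𝒢.d_inv, 𝒢.r_inv, hgh]
  have hhx' : α.act h x ∈ α.D (𝒢.inv (𝒢.inv h)) := by
    rw [𝒢.inv_inv]
    exact α.act_mem h x hx
  simpa only [𝒢.mul_inv_rev hgh, α.act_act h x hx] using
    α.act_comp_mem (𝒢.inv h) (𝒢.inv g) hinv _ hhx' hhx

/-- The orbit equivalence relation of a partial action: `x` is related to `y` when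
`y = α_g(x)` for some `g` with `x ∈ X_{g⁻¹}`. -/
def orbitRel : Setoid X where
  r x y := ∃ g, x ∈ α.D (𝒢.inv g) ∧ y = α.act g x
  iseqv :=
    { refl := fun x ↦ by
        refine ⟨α.anchor x, ?_, (α.act_unit _ (α.anchor_isUnit x) x (α.mem_anchor x)).symm⟩
        rw [𝒢.inv_eq_self_of_d_eq_self (α.anchor_isUnit x)]
        exact α.mem_anchor x
      symm := by
        rintro x _ ⟨g, hx, rfl⟩
        refine ⟨𝒢.inv g, ?_, (α.act_act g x hx).symm⟩
        rw [𝒢.inv_inv]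
        exact α.act_mem g x hx
      trans := by
        rintro x _ _ ⟨h, hx, rfl⟩ ⟨g, hhx, rfl⟩
        have hgh : 𝒢.d g = 𝒢.r h := α.d_eq_r_of_mem hhx (α.act_mem h x hx)
        exact ⟨𝒢.mul g h, α.mem_D_inv_mul hx hhx, α.act_comp g h hgh x hx hhx⟩ }

theorem transitive_iff_exists_forall_orbitRel :
    α.Transitive ↔ ∃ x, ∀ y, α.orbitRel x y :=
  Iff.rfl

variable {α}

theorem IsGlobal.D_inv_eq_D_d (hα : α.IsGlobal) (g : G) : α.D (𝒢.inv g) = α.D (𝒢.d g) := by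
  refine (α.D_inv_subset_D_d g).antisymm fun x hx ↦ ?_
  have hdom : x ∈ α.D (𝒢.inv (𝒢.mul (𝒢.inv g) g)) := by
    rwa [𝒢.inv_mul, 𝒢.inv_eq_self_of_d_eq_self (𝒢.d_idem g)]
  exact ((hα (𝒢.inv g) g (𝒢.d_inv g)).1 x |>.1 hdom).1

end PartialAction

namespace IsGlobalization

variable {G : Type u} {X : Type v} {Y : Type w} {𝒢 : SetGroupoid G}
  {α : PartialAction 𝒢 X} {β : PartialAction 𝒢 Y} {i : X → Y}

theorem apply_mem_D (h : IsGlobalization α β i) {g : G} {x : X} (hx : x ∈ α.D g) :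
    i x ∈ β.D g := by
  have hix : i x ∈ i '' α.D g := Set.mem_image_of_mem i hx
  rw [h.cond_i] at hix
  obtain ⟨-, y, ⟨-, hy⟩, hyx⟩ := hix
  exact hyx ▸ β.act_mem g y hy

theorem mem_D_inv_iff (h : IsGlobalization α β i) {g : G} {x : X} :
    x ∈ α.D (𝒢.inv g) ↔ i x ∈ β.D (𝒢.inv g) ∧ β.act g (i x) ∈ Set.range i := by
  refine ⟨fun hx ↦ ⟨h.apply_mem_D hx, α.act g x, (h.cond_ii g x hx).symm⟩, ?_⟩
  rintro ⟨hix, hgx⟩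
  have hgx_mem : β.act g (i x) ∈ β.D (𝒢.inv (𝒢.inv g)) := by
    rw [𝒢.inv_inv]
    exact β.act_mem g _ hix
  rw [← h.inj.mem_set_image, h.cond_i]
  exact ⟨Set.mem_range_self x, β.act g (i x), ⟨hgx, hgx_mem⟩, β.act_act g _ hix⟩

theorem orbitRel_apply_iff (h : IsGlobalization α β i) {x y : X} :
    β.orbitRel (i x) (i y) ↔ α.orbitRel x y := by
  constructor
  · rintro ⟨g, hix, hy⟩
    have hx : x ∈ α.D (𝒢.inv g) := h.mem_D_inv_iff.2 ⟨hix, y, hy⟩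
    exact ⟨g, hx, h.inj (hy.trans (h.cond_ii g x hx))⟩
  · rintro ⟨g, hx, rfl⟩
    exact ⟨g, h.apply_mem_D hx, (h.cond_ii g x hx).symm⟩

theorem exists_orbitRel_apply (h : IsGlobalization α β i) (y : Y) :
    ∃ x, β.orbitRel (i x) y := by
  have hy := β.mem_anchor y
  simp only [h.cond_iii, Set.mem_iUnion] at hy
  obtain ⟨g, -, _, ⟨x, hx, rfl⟩, hgx⟩ := hy
  refine ⟨x, g, ?_, hgx.symm⟩
  rw [h.global.D_inv_eq_D_d]
  exact h.apply_mem_D hx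

end IsGlobalization

/-- If the global action `β` of `G` on `Y` is a globalization of the
partial action `α` of `G` on `X`, then `α` is transitive iff `β` is transitive. -/
theorem transitive_iff_globalization_transitive {G : Type u} {X : Type v} {Y : Type w}
    {𝒢 : SetGroupoid G} (α : PartialAction 𝒢 X) (β : PartialAction 𝒢 Y) (i : X → Y)
    (h : IsGlobalization α β i) :
    α.Transitive ↔ β.Transitive := by
  rw [α.transitive_iff_exists_forall_orbitRel, β.transitive_iff_exists_forall_orbitRel]
  constructor
  · rintro ⟨x, hx⟩
    refine ⟨i x, fun y ↦ ?_⟩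
    obtain ⟨z, hzy⟩ := h.exists_orbitRel_apply y
    exact β.orbitRel.trans (h.orbitRel_apply_iff.2 (hx z)) hzy
  · rintro ⟨y, hy⟩
    obtain ⟨x, hxy⟩ := h.exists_orbitRel_apply y
    exact ⟨x, fun z ↦ h.orbitRel_apply_iff.1 (β.orbitRel.trans hxy (hy (i z)))⟩
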